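/- Fix D ∈ ℕ and parameters α_1,…,α_D ≥ 0, set p_i = n^{−α_i} for i ≤ D and p_i = 0 for i > D, and let k ≤ D. Set γ_k = max_{k ≤ i ≤ D} (i+1−α_i) and assume γ_k < k+1. Then in the upper multiparametric model X̄(n; α_1,…,α_D), the expected number of k-dimensional faces of X̄ is Θ(n^{γ_k}) as n → ∞; equivalently, for a fixed (k+1)-element subset s of {1,…,n}, the probability that s is a face of X̄ is Θ(n^{γ_k − (k+1)}). -/

import Mathlib

/-!
By linearity of expectation, the expected number of `k`-faces is the sum, over the `n.choose (k+1)`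
sets `s` of size `k + 1`, of the probability that `s` is a face; as `k ≥ 1`, this happens exactly
when some superset `t ⊇ s` is selected. There are `N_i = (n-k-1).choose (i-k)` supersets of size
`i + 1`, each selected with probability `n ^ (-α i)`, and `N_i * n ^ (-α i) ≤ n ^ (γ - (k+1))`.

* Upper bound (`face_prob_le`): the union bound gives a face probability of at most
  `∑ i ∈ Icc k D, N_i * n ^ (-α i)`, hence of order at most `n ^ (γ - (k+1))`.
* Lower bound (`le_face_prob`): let `i` attain the maximum defining `γ`. By independence, `s` is
  a face with probability at least `1 - (1 - n ^ (-α i)) ^ N_i`. Since `γ < k + 1`, the mean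
  `N_i * n ^ (-α i)` is at most one, so this is at least `N_i * n ^ (-α i) / 2`. Summing over `s`,
  the product `n.choose (k+1) * N_i` is of order `n ^ (i+1)` (`le_choose_mul_choose`), and
  `i + 1 - α i = γ`.
-/

open Finset MeasureTheory
open scoped ENNReal

/-- A finite abstract simplicial complex on vertex type `V`. -/
structure SComplex (V : Type) where
  faces : Finset (Finset V)
  down_closed : ∀ ⦃s⦄, s ∈ faces → ∀ ⦃t : Finset V⦄, t ⊆ s → t ∈ faces

/-- Simplicial coboundary of a cochain. -/
def delta {V : Type} [LinearOrder V] {R : Type} [CommRing R]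
    (a : Finset V → R) : Finset V → R :=
  fun s => ∑ v ∈ s, (-1 : R) ^ (s.filter (fun w => w < v)).card * a (s.erase v)

def IsCocycle {V : Type} [LinearOrder V] (X : SComplex V) (R : Type) [CommRing R]
    (k : ℕ) (a : Finset V → R) : Prop :=
  ∀ s ∈ X.faces, s.card = k + 2 → delta a s = 0

def IsCoboundary {V : Type} [LinearOrder V] (X : SComplex V) (R : Type) [CommRing R]
    (k : ℕ) (a : Finset V → R) : Prop :=
  ∃ f : Finset V → R, ∀ s ∈ X.faces, s.card = k + 1 → a s = delta f s

/-- The simplicial cup product of a `k`-cochain and an `l`-cochain. -/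
def cup {V : Type} [LinearOrder V] {R : Type} [CommRing R] (k l : ℕ)
    (a b : Finset V → R) : Finset V → R :=
  fun s => a ((s.sort (· ≤ ·)).take (k + 1)).toFinset *
    b ((s.sort (· ≤ ·)).drop k).toFinset

/-- Bernoulli measure on `Bool` with success probability `p`. -/
noncomputable def bernoulliMeasure (p : ℝ≥0∞) : Measure Bool :=
  p • Measure.dirac true + (1 - p) • Measure.dirac false

/-- Each subset `s` with `|s| = i+1` is selected independently with probability `p i`. -/
noncomputable def selectionMeasure (n : ℕ) (p : ℕ → ℝ≥0∞) :
    Measure (Finset (Fin n) → Bool) :=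
  Measure.pi fun s => bernoulliMeasure (p (s.card - 1))

/-- The lower multiparametric model: maximal complex contained in the selected hypergraph. -/
def lowerComplex (n : ℕ) (ω : Finset (Fin n) → Bool) : SComplex (Fin n) where
  faces := Finset.univ.filter fun s => ∀ t ⊆ s, 2 ≤ t.card → ω t = true
  down_closed := by
    intro s hs t hts
    simp only [Finset.mem_filter, Finset.mem_univ, true_and] at hs ⊢
    exact fun u hu hc => hs u (hu.trans hts) hc

/-- The upper multiparametric model: minimal complex containing the selected hypergraph. -/
def upperComplex (n : ℕ) (ω : Finset (Fin n) → Bool) : SComplex (Fin n) where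
  faces := Finset.univ.filter fun s =>
    s.card ≤ 1 ∨ ∃ t, s ⊆ t ∧ 2 ≤ t.card ∧ ω t = true
  down_closed := by
    intro s hs t hts
    simp only [Finset.mem_filter, Finset.mem_univ, true_and] at hs ⊢
    rcases hs with h | ⟨u, hsu, hc, hω⟩
    · exact Or.inl (le_trans (Finset.card_le_card hts) h)
    · exact Or.inr ⟨u, hts.trans hsu, hc, hω⟩

/-- Selection probabilities of the lower model: `p i = n ^ (-α i)`. -/
noncomputable def lowerP (α : ℕ → ℝ) (n : ℕ) : ℕ → ℝ≥0∞ :=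
  fun i => ENNReal.ofReal ((n : ℝ) ^ (-(α i)))

/-- Selection probabilities of the upper model with `D` parameters. -/
noncomputable def upperP (D : ℕ) (α : ℕ → ℝ) (n : ℕ) : ℕ → ℝ≥0∞ :=
  fun i => if i ≤ D then ENNReal.ofReal ((n : ℝ) ^ (-(α i))) else 0

def S1 (α : ℕ → ℝ) (k : ℕ) : ℝ :=
  ∑ i ∈ Finset.Icc 1 (k + 1), ((k + 1).choose i : ℝ) * α i

def S2 (α : ℕ → ℝ) (k : ℕ) : ℝ :=
  ∑ i ∈ Finset.Icc 1 k, ((k + 2).choose (i + 1) : ℝ) * α i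

/-- The `d`-dimensional faces of a complex. -/
def dimFaces {V : Type} [DecidableEq V] (X : SComplex V) (d : ℕ) : Finset (Finset V) :=
  X.faces.filter fun s => s.card = d + 1

/-- Adjacency of `d`-faces: sharing a `(d-1)`-dimensional face. -/
def AdjRel {V : Type} [DecidableEq V] (X : SComplex V) (d : ℕ) (σ τ : Finset V) : Prop :=
  σ ∈ dimFaces X d ∧ τ ∈ dimFaces X d ∧ d ≤ (σ ∩ τ).card

def IsPure {V : Type} [DecidableEq V] (X : SComplex V) (d : ℕ) : Prop :=
  ∀ s ∈ X.faces, ∃ t ∈ X.faces, s ⊆ t ∧ t.card = d + 1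

def StronglyConnected {V : Type} [DecidableEq V] (X : SComplex V) (d : ℕ) : Prop :=
  (dimFaces X d).Nonempty ∧
    ∀ σ ∈ dimFaces X d, ∀ τ ∈ dimFaces X d, Relation.ReflTransGen (AdjRel X d) σ τ

open scoped Classical in
/-- The strong connectivity component of the `d`-face `σ0`. -/
noncomputable def component {V : Type} [DecidableEq V] (X : SComplex V) (d : ℕ)
    (σ0 : Finset V) : SComplex V where
  faces := (X.faces.filter fun τ =>
      τ.card = d + 1 ∧ Relation.ReflTransGen (AdjRel X d) σ0 τ).biUnion Finset.powerset
  down_closed := by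
    intro s hs t hts
    simp only [Finset.mem_biUnion, Finset.mem_powerset] at hs ⊢
    obtain ⟨u, hu, hsu⟩ := hs
    exact ⟨u, hu, hts.trans hsu⟩

/-- The `d`-skeleton of a complex. -/
def skeleton {V : Type} [DecidableEq V] (X : SComplex V) (d : ℕ) : SComplex V where
  faces := X.faces.filter fun s => s.card ≤ d + 1
  down_closed := by
    intro s hs t hts
    simp only [Finset.mem_filter] at hs ⊢
    exact ⟨X.down_closed hs.1 hts, le_trans (Finset.card_le_card hts) hs.2⟩

/-- The subcomplex generated by a family of faces. -/
def generated {V : Type} [DecidableEq V] (F : Finset (Finset V)) : SComplex V where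
  faces := F.biUnion Finset.powerset
  down_closed := by
    intro s hs t hts
    simp only [Finset.mem_biUnion, Finset.mem_powerset] at hs ⊢
    obtain ⟨u, hu, hsu⟩ := hs
    exact ⟨u, hu, hts.trans hsu⟩

/-- There is an elementary collapse from `X` to `Y`. -/
def ElemCollapse {V : Type} [DecidableEq V] (X Y : SComplex V) : Prop :=
  ∃ σ τ : Finset V, σ ∈ X.faces ∧ τ ∈ X.faces ∧ σ ⊂ τ ∧ τ.card = σ.card + 1 ∧
    (∀ ρ ∈ X.faces, σ ⊆ ρ → ρ = σ ∨ ρ = τ) ∧ Y.faces = X.faces \ {σ, τ}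

/-- `X` collapses onto dimension `l`. -/
def CollapsesOntoDim {V : Type} [DecidableEq V] (X : SComplex V) (l : ℤ) : Prop :=
  ∃ Y : SComplex V, Relation.ReflTransGen ElemCollapse X Y ∧
    ∀ s ∈ Y.faces, (s.card : ℤ) ≤ l + 1

/-- Expected number of embeddings of `C` into the lower multiparametric complex. -/
noncomputable def expEmb {W : Type} [Fintype W] [DecidableEq W] (C : SComplex W)
    (α : ℕ → ℝ) (n : ℕ) : ℝ≥0∞ :=
  ∫⁻ ω, (Nat.card {φ : W ↪ Fin n //
      ∀ σ ∈ C.faces, σ.map φ ∈ (lowerComplex n ω).faces} : ℝ≥0∞)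
    ∂ selectionMeasure n (lowerP α n)

open Asymptotics

lemma isProbabilityMeasure_bernoulliMeasure {p : ℝ≥0∞} (hp : p ≤ 1) :
    IsProbabilityMeasure (bernoulliMeasure p) := by
  constructor
  simp [bernoulliMeasure, add_tsub_cancel_of_le hp]

lemma bernoulliMeasure_true (p : ℝ≥0∞) : bernoulliMeasure p {true} = p := by
  simp [bernoulliMeasure]

lemma bernoulliMeasure_false (p : ℝ≥0∞) : bernoulliMeasure p {false} = 1 - p := by
  simp [bernoulliMeasure]

lemma isProbabilityMeasure_selectionMeasure (n : ℕ) {p : ℕ → ℝ≥0∞} (hp : ∀ i, p i ≤ 1) :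
    IsProbabilityMeasure (selectionMeasure n p) := by
  have := fun s : Finset (Fin n) => isProbabilityMeasure_bernoulliMeasure (hp (s.card - 1))
  unfold selectionMeasure
  infer_instance

lemma selectionMeasure_selected (n : ℕ) {p : ℕ → ℝ≥0∞} (hp : ∀ i, p i ≤ 1)
    (t : Finset (Fin n)) :
    selectionMeasure n p {ω | ω t = true} = p (t.card - 1) := by
  have := fun s : Finset (Fin n) => isProbabilityMeasure_bernoulliMeasure (hp (s.card - 1))
  have h := (measurePreserving_eval
    (fun s : Finset (Fin n) => bernoulliMeasure (p (s.card - 1))) t).measure_preimage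
      (MeasurableSet.singleton true).nullMeasurableSet
  rw [bernoulliMeasure_true] at h
  exact h

/-- Independence of the selections: the probability that no member of a family `T` is selected
is the product of the individual probabilities. -/
lemma selectionMeasure_none_selected (n : ℕ) {p : ℕ → ℝ≥0∞} (hp : ∀ i, p i ≤ 1)
    (T : Finset (Finset (Fin n))) :
    selectionMeasure n p {ω | ∀ t ∈ T, ω t = false} = ∏ t ∈ T, (1 - p (t.card - 1)) := by
  have := fun s : Finset (Fin n) => isProbabilityMeasure_bernoulliMeasure (hp (s.card - 1))
  have hset : {ω : Finset (Fin n) → Bool | ∀ t ∈ T, ω t = false}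
      = Set.univ.pi fun t => if t ∈ T then {false} else Set.univ := by
    ext ω
    simp only [Set.mem_ofPred_eq, Set.mem_pi, Set.mem_univ, true_implies]
    refine forall_congr' fun t => ?_
    split_ifs with h <;> simp [h]
  rw [hset, selectionMeasure, Measure.pi_pi]
  rw [← Finset.prod_subset (Finset.subset_univ T)]
  · refine Finset.prod_congr rfl fun t ht => ?_
    rw [if_pos ht, bernoulliMeasure_false]
  · intro t _ ht
    rw [if_neg ht, measure_univ]

lemma upperP_le_one (D : ℕ) {α : ℕ → ℝ} (hα : ∀ i, 0 ≤ α i) {n : ℕ} (hn : 1 ≤ n) (i : ℕ) :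
    upperP D α n i ≤ 1 := by
  unfold upperP
  split_ifs
  · rw [ENNReal.ofReal_le_one]
    exact Real.rpow_le_one_of_one_le_of_nonpos (by exact_mod_cast hn) (by linarith [hα i])
  · exact zero_le_one

lemma toReal_upperP {D i : ℕ} (hi : i ≤ D) (α : ℕ → ℝ) (n : ℕ) :
    (upperP D α n i).toReal = (n : ℝ) ^ (-(α i)) := by
  rw [upperP, if_pos hi, ENNReal.toReal_ofReal (Real.rpow_nonneg n.cast_nonneg _)]

/-- Linearity of expectation: the expected number of `k`-faces is the sum over `(k+1)`-sets of the
probability of being a face. -/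
lemma expected_faces_eq_sum (n k : ℕ) {p : ℕ → ℝ≥0∞} (hp : ∀ i, p i ≤ 1) :
    (∫⁻ ω, (((upperComplex n ω).faces.filter fun s => s.card = k + 1).card : ℝ≥0∞)
        ∂ selectionMeasure n p).toReal
      = ∑ s ∈ powersetCard (k + 1) univ,
          (selectionMeasure n p).real {ω | s ∈ (upperComplex n ω).faces} := by
  classical
  have := isProbabilityMeasure_selectionMeasure n hp
  have hcard : ∀ ω : Finset (Fin n) → Bool,
      (((upperComplex n ω).faces.filter fun s => s.card = k + 1).card : ℝ≥0∞)
        = ∑ s ∈ powersetCard (k + 1) (univ : Finset (Fin n)),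
          Set.indicator {ω | s ∈ (upperComplex n ω).faces} 1 ω := by
    intro ω
    simp only [Set.indicator_apply, Set.mem_ofPred_eq, Pi.one_apply]
    rw [Finset.sum_boole]
    congr 2
    ext s
    simp [Finset.mem_powersetCard, and_comm]
  simp_rw [hcard]
  rw [lintegral_finsetSum _ fun s _ => Measurable.of_discrete]
  simp_rw [lintegral_indicator_one (MeasurableSet.of_discrete)]
  rw [ENNReal.toReal_sum fun s _ => measure_ne_top _ _]
  rfl

lemma mem_faces_iff {n : ℕ} {ω : Finset (Fin n) → Bool} {s : Finset (Fin n)}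
    (hs : 2 ≤ s.card) :
    s ∈ (upperComplex n ω).faces ↔ ∃ t, s ⊆ t ∧ ω t = true := by
  simp only [upperComplex, mem_filter, mem_univ, true_and]
  constructor
  · rintro (h | ⟨t, h1, -, h3⟩)
    · omega
    · exact ⟨t, h1, h3⟩
  · rintro ⟨t, h1, h3⟩
    exact Or.inr ⟨t, h1, hs.trans (card_le_card h1), h3⟩

/-- The sets of size `i + 1` containing `s`. -/
def supersets {n : ℕ} (s : Finset (Fin n)) (i : ℕ) : Finset (Finset (Fin n)) :=
  (powersetCard (i + 1) univ).filter (s ⊆ ·)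

lemma mem_supersets {n i : ℕ} {s t : Finset (Fin n)} :
    t ∈ supersets s i ↔ t.card = i + 1 ∧ s ⊆ t := by
  simp [supersets, Finset.mem_powersetCard]

lemma card_supersets {n k i : ℕ} {s : Finset (Fin n)} (hs : s.card = k + 1) (hki : k ≤ i) :
    (supersets s i).card = (n - (k + 1)).choose (i - k) := by
  rw [supersets, Finset.card_filter_powersetCard_subset _ _ _ (subset_univ s) (by omega)]
  rw [card_univ, Fintype.card_fin, hs, Nat.add_sub_add_right]

/-- The union bound over all supersets of `s`, grouped by size. -/
lemma face_prob_le {D k n : ℕ} (hk : 1 ≤ k) {α : ℕ → ℝ} (hα : ∀ i, 0 ≤ α i) (hn : 1 ≤ n)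
    {s : Finset (Fin n)} (hs : s.card = k + 1) :
    (selectionMeasure n (upperP D α n)).real {ω | s ∈ (upperComplex n ω).faces}
      ≤ ∑ i ∈ Icc k D, ((n - (k + 1)).choose (i - k) : ℝ) * (n : ℝ) ^ (-(α i)) := by
  have hp := fun i => upperP_le_one D hα hn i
  have := isProbabilityMeasure_selectionMeasure n hp
  -- Sets of size larger than `D + 1` are selected with probability zero.
  have hbig : (selectionMeasure n (upperP D α n)).real
      (⋃ t ∈ univ.filter (fun t : Finset (Fin n) => D + 1 < t.card), {ω | ω t = true}) ≤ 0 := by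
    refine (measureReal_biUnion_finset_le _ _).trans (Finset.sum_nonpos fun t ht => ?_)
    rw [mem_filter] at ht
    rw [Measure.real, selectionMeasure_selected n hp, upperP, if_neg (by omega)]
    simp
  have hsmall : (selectionMeasure n (upperP D α n)).real
      (⋃ i ∈ Icc k D, ⋃ t ∈ supersets s i, {ω | ω t = true})
      ≤ ∑ i ∈ Icc k D, ((n - (k + 1)).choose (i - k) : ℝ) * (n : ℝ) ^ (-(α i)) := by
    refine (measureReal_biUnion_finset_le _ _).trans (Finset.sum_le_sum fun i hi => ?_)
    rw [Finset.mem_Icc] at hi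
    refine (measureReal_biUnion_finset_le _ _).trans ?_
    rw [← card_supersets hs hi.1, ← nsmul_eq_mul]
    refine Finset.sum_le_card_nsmul _ _ _ fun t ht => ?_
    rw [mem_supersets] at ht
    rw [Measure.real, selectionMeasure_selected n hp, ht.1, Nat.add_sub_cancel,
      toReal_upperP hi.2]
  have hsub : {ω | s ∈ (upperComplex n ω).faces} ⊆
      (⋃ i ∈ Icc k D, ⋃ t ∈ supersets s i, {ω | ω t = true}) ∪
      (⋃ t ∈ univ.filter (fun t : Finset (Fin n) => D + 1 < t.card), {ω | ω t = true}) := by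
    intro ω hω
    obtain ⟨t, hst, ht⟩ := (mem_faces_iff (s := s) (by omega)).1 hω
    have hc := card_le_card hst
    by_cases hD : D + 1 < t.card
    · right
      simp only [Set.mem_iUnion]
      exact ⟨t, by simpa using hD, ht⟩
    · left
      simp only [Set.mem_iUnion]
      exact ⟨t.card - 1, Finset.mem_Icc.2 ⟨by omega, by omega⟩, t,
        mem_supersets.2 ⟨by omega, hst⟩, ht⟩
  have := (measureReal_mono (μ := selectionMeasure n (upperP D α n)) hsub).trans
    (measureReal_union_le _ _)
  linarith

/-- A union of `N` independent events of probability `x` has probability at least `N * x / 2`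
as soon as `N * x ≤ 1`. -/
lemma half_le_one_sub_pow {x : ℝ} (hx0 : 0 ≤ x) (hx1 : x ≤ 1) (N : ℕ) (hN : N * x ≤ 1) :
    N * x / 2 ≤ 1 - (1 - x) ^ N := by
  -- `(1 - x) ^ N * (1 + N x) ≤ ((1 - x) (1 + x)) ^ N ≤ 1` by Bernoulli's inequality.
  have h1 : 1 + N * x ≤ (1 + x) ^ N := one_add_mul_le_pow (by linarith) N
  have h0 : 0 ≤ (1 - x) ^ N := pow_nonneg (by linarith) N
  have h2 : (1 - x) ^ N * (1 + x) ^ N ≤ 1 := by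
    rw [← mul_pow]
    exact pow_le_one₀ (by nlinarith) (by nlinarith)
  have h3 : (1 - x) ^ N * (1 + N * x) ≤ 1 := (mul_le_mul_of_nonneg_left h1 h0).trans h2
  have hy : 0 ≤ N * x := by positivity
  nlinarith

/-- Only supersets of the single size `i + 1` are used; their selections are independent. -/
lemma le_face_prob {D k n i : ℕ} (hk : 1 ≤ k) {α : ℕ → ℝ} (hα : ∀ i, 0 ≤ α i) (hn : 1 ≤ n)
    {s : Finset (Fin n)} (hs : s.card = k + 1) (hki : k ≤ i) (hiD : i ≤ D)
    (hle : ((n - (k + 1)).choose (i - k) : ℝ) * (n : ℝ) ^ (-(α i)) ≤ 1) :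
    ((n - (k + 1)).choose (i - k) : ℝ) * (n : ℝ) ^ (-(α i)) / 2
      ≤ (selectionMeasure n (upperP D α n)).real {ω | s ∈ (upperComplex n ω).faces} := by
  have hp := fun i => upperP_le_one D hα hn i
  have := isProbabilityMeasure_selectionMeasure n hp
  have hx : (upperP D α n i).toReal = (n : ℝ) ^ (-(α i)) := toReal_upperP hiD α n
  have hx1 : (n : ℝ) ^ (-(α i)) ≤ 1 :=
    Real.rpow_le_one_of_one_le_of_nonpos (by exact_mod_cast hn) (by linarith [hα i])
  have hnone : (selectionMeasure n (upperP D α n)).real {ω | ∀ t ∈ supersets s i, ω t = false}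
      = (1 - (n : ℝ) ^ (-(α i))) ^ (n - (k + 1)).choose (i - k) := by
    rw [Measure.real, selectionMeasure_none_selected n hp,
      Finset.prod_congr rfl (g := fun _ => 1 - upperP D α n i), Finset.prod_const,
      card_supersets hs hki, ENNReal.toReal_pow, ENNReal.toReal_sub_of_le (hp i) (by simp), hx]
    · simp
    · intro t ht
      rw [(mem_supersets.1 ht).1, Nat.add_sub_cancel]
  have hsub : {ω : Finset (Fin n) → Bool | ∀ t ∈ supersets s i, ω t = false}ᶜ
      ⊆ {ω | s ∈ (upperComplex n ω).faces} := by
    intro ω hω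
    simp only [Set.mem_compl_iff, Set.mem_ofPred_eq, not_forall] at hω
    obtain ⟨t, ht, hωt⟩ := hω
    exact (mem_faces_iff (by omega)).2 ⟨t, (mem_supersets.1 ht).2, by simpa using hωt⟩
  have h := measureReal_mono (μ := selectionMeasure n (upperP D α n)) hsub
  rw [probReal_compl_eq_one_sub MeasurableSet.of_discrete, hnone] at h
  exact (half_le_one_sub_pow (by positivity) hx1 _ hle).trans h

lemma choose_le_rpow {n k i : ℕ} (hki : k ≤ i) :
    ((n - (k + 1)).choose (i - k) : ℝ) ≤ (n : ℝ) ^ ((i : ℝ) - k) := by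
  rw [← Nat.cast_sub hki, Real.rpow_natCast]
  calc ((n - (k + 1)).choose (i - k) : ℝ) ≤ ((n - (k + 1) : ℕ) : ℝ) ^ (i - k) := by
        exact_mod_cast Nat.choose_le_pow _ _
    _ ≤ (n : ℝ) ^ (i - k) := by
        gcongr
        exact Nat.sub_le _ _

lemma choose_mul_rpow_le {n k i : ℕ} (hn : 1 ≤ n) (hki : k ≤ i) {α : ℕ → ℝ} {γ : ℝ}
    (hi : (i : ℝ) + 1 - α i ≤ γ) :
    ((n - (k + 1)).choose (i - k) : ℝ) * (n : ℝ) ^ (-(α i)) ≤ (n : ℝ) ^ (γ - (k + 1)) := by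
  have hn' : (1 : ℝ) ≤ n := by exact_mod_cast hn
  calc ((n - (k + 1)).choose (i - k) : ℝ) * (n : ℝ) ^ (-(α i))
      ≤ (n : ℝ) ^ ((i : ℝ) - k) * (n : ℝ) ^ (-(α i)) := by
        gcongr
        exact choose_le_rpow hki
    _ = (n : ℝ) ^ ((i : ℝ) - k - α i) := by
        rw [← Real.rpow_add (by linarith), sub_eq_add_neg _ (α i)]
    _ ≤ (n : ℝ) ^ (γ - (k + 1)) := Real.rpow_le_rpow_of_exponent_le hn' (by linarith)

/-- The number of pairs `s ⊆ t` with `|s| = k + 1` and `|t| = i + 1` is of order at least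
`n ^ (i + 1)`. -/
lemma le_choose_mul_choose {n k i : ℕ} (hki : k ≤ i) (hn : 2 * i ≤ n) :
    (n : ℝ) ^ (i + 1) / (2 ^ (i + 1) * (i + 1).factorial)
      ≤ (n.choose (k + 1) : ℝ) * ((n - (k + 1)).choose (i - k) : ℝ) := by
  have h1 : n.choose (i + 1) ≤ n.choose (k + 1) * (n - (k + 1)).choose (i - k) := by
    have h := Nat.choose_mul (n := n) (k := i + 1) (s := k + 1) (by omega)
    rw [Nat.add_sub_add_right] at h
    rw [← h]
    exact Nat.le_mul_of_pos_right _ (Nat.choose_pos (by omega))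
  have h2 := Nat.pow_le_choose (α := ℝ) (i + 1) n
  rw [Nat.add_sub_add_right] at h2
  have h3 : (n : ℝ) / 2 ≤ ((n - i : ℕ) : ℝ) := by
    have : (n : ℝ) ≤ 2 * ((n - i : ℕ) : ℝ) := by exact_mod_cast (by omega : n ≤ 2 * (n - i))
    linarith
  calc (n : ℝ) ^ (i + 1) / (2 ^ (i + 1) * (i + 1).factorial)
      = ((n : ℝ) / 2) ^ (i + 1) / (i + 1).factorial := by
        rw [div_pow, div_div]
    _ ≤ ((n - i : ℕ) : ℝ) ^ (i + 1) / (i + 1).factorial := by gcongr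
    _ ≤ n.choose (i + 1) := h2
    _ ≤ _ := by exact_mod_cast h1

/-- in the upper multiparametric model with `D` parameters, for `1 ≤ k ≤ D`
and `γ_k = max_{k ≤ i ≤ D} (i + 1 − α_i) < k + 1`, the expected number of `k`-dimensional
faces is `Θ(n^{γ_k})`. -/
theorem expected_k_faces_upper_model (D k : ℕ) (hk : 1 ≤ k) (hkD : k ≤ D)
    (α : ℕ → ℝ) (hα : ∀ i, 0 ≤ α i) (γ : ℝ)
    (hγ : γ = (Finset.Icc k D).sup' (Finset.nonempty_Icc.mpr hkD)
      (fun i => (i : ℝ) + 1 - α i))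
    (hγk : γ < k + 1) :
    (fun n => (∫⁻ ω,
        (((upperComplex n ω).faces.filter fun s => s.card = k + 1).card : ℝ≥0∞)
        ∂ selectionMeasure n (upperP D α n)).toReal)
      =Θ[Filter.atTop] (fun n => (n : ℝ) ^ γ) := by
  have hle : ∀ i ∈ Icc k D, (i : ℝ) + 1 - α i ≤ γ := fun i hi => by
    rw [hγ]
    exact Finset.le_sup' (fun i : ℕ => (i : ℝ) + 1 - α i) hi
  obtain ⟨i, hi, hiγ⟩ := Finset.exists_mem_eq_sup' (Finset.nonempty_Icc.mpr hkD)
    (fun i : ℕ => (i : ℝ) + 1 - α i)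
  rw [← hγ] at hiγ
  obtain ⟨hki, hiD⟩ := Finset.mem_Icc.1 hi
  refine ⟨IsBigO.of_bound ((Icc k D).card : ℝ) ?_,
    IsBigO.of_bound (2 * (2 ^ (i + 1) * (i + 1).factorial) : ℝ) ?_⟩
  · filter_upwards [Filter.eventually_ge_atTop 1] with n hn
    have hn0 : (0 : ℝ) < n := by exact_mod_cast hn
    rw [Real.norm_of_nonneg ENNReal.toReal_nonneg, Real.norm_of_nonneg (by positivity),
      expected_faces_eq_sum n k fun i => upperP_le_one D hα hn i]
    calc _ ≤ (powersetCard (k + 1) (univ : Finset (Fin n))).card •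
          ((Icc k D).card • (n : ℝ) ^ (γ - (k + 1))) := by
          refine Finset.sum_le_card_nsmul _ _ _ fun s hs => ?_
          refine (face_prob_le hk hα hn (mem_powersetCard.1 hs).2).trans ?_
          exact Finset.sum_le_card_nsmul _ _ _ fun j hj =>
            choose_mul_rpow_le hn (Finset.mem_Icc.1 hj).1 (hle j hj)
      _ = (n.choose (k + 1) : ℝ) * ((Icc k D).card * (n : ℝ) ^ (γ - (k + 1))) := by
          rw [card_powersetCard, card_univ, Fintype.card_fin, nsmul_eq_mul, nsmul_eq_mul]
      _ ≤ (n : ℝ) ^ (k + 1) * ((Icc k D).card * (n : ℝ) ^ (γ - (k + 1))) := by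
          gcongr
          exact_mod_cast Nat.choose_le_pow n (k + 1)
      _ = (Icc k D).card * (n : ℝ) ^ γ := by
          rw [mul_left_comm, ← Real.rpow_natCast, ← Real.rpow_add hn0]
          congr 2
          push_cast
          ring
  · filter_upwards [Filter.eventually_ge_atTop 1, Filter.eventually_ge_atTop (2 * i)] with n hn hni
    have hn0 : (0 : ℝ) < n := by exact_mod_cast hn
    rw [Real.norm_of_nonneg ENNReal.toReal_nonneg, Real.norm_of_nonneg (by positivity),
      expected_faces_eq_sum n k fun i => upperP_le_one D hα hn i]
    -- This is where `γ < k + 1` enters: the expected number of selected `(i+1)`-sets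
    -- containing a fixed `(k+1)`-set is at most one.
    have hone : ((n - (k + 1)).choose (i - k) : ℝ) * (n : ℝ) ^ (-(α i)) ≤ 1 :=
      (choose_mul_rpow_le hn hki hiγ.ge).trans
        (Real.rpow_le_one_of_one_le_of_nonpos (by exact_mod_cast hn) (by linarith))
    have hsum := Finset.card_nsmul_le_sum (powersetCard (k + 1) (univ : Finset (Fin n)))
      (fun s => (selectionMeasure n (upperP D α n)).real {ω | s ∈ (upperComplex n ω).faces}) _
      fun s hs => le_face_prob (D := D) hk hα hn (mem_powersetCard.1 hs).2 hki hiD hone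
    rw [card_powersetCard, card_univ, Fintype.card_fin, nsmul_eq_mul] at hsum
    have hcount := le_choose_mul_choose hki hni
    have hpow : (n : ℝ) ^ γ = (n : ℝ) ^ (i + 1) * (n : ℝ) ^ (-(α i)) := by
      rw [← Real.rpow_natCast, ← Real.rpow_add hn0, hiγ]
      congr 1
      push_cast
      ring
    have hC : (0 : ℝ) < 2 ^ (i + 1) * (i + 1).factorial := by positivity
    rw [div_le_iff₀ hC] at hcount
    calc (n : ℝ) ^ γ = (n : ℝ) ^ (i + 1) * (n : ℝ) ^ (-(α i)) := hpow
      _ ≤ ((n.choose (k + 1) : ℝ) * ((n - (k + 1)).choose (i - k) : ℝ)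
            * (2 ^ (i + 1) * (i + 1).factorial)) * (n : ℝ) ^ (-(α i)) := by gcongr
      _ = 2 * (2 ^ (i + 1) * (i + 1).factorial) * ((n.choose (k + 1) : ℝ) *
            (((n - (k + 1)).choose (i - k) : ℝ) * (n : ℝ) ^ (-(α i)) / 2)) := by ring
      _ ≤ _ := by gcongr
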